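/- arXiv:1403.7150 — 6 statements merged into one kernel-verified Lean document; each statement's English description precedes it below -/
import Mathlib

section
/- Let b > 0, x > 0, and let p : ℝ → ℝ be a continuous nonnegative function that is nondecreasing on [0, x] and satisfies p(0) > 0. Then ∫_0^x exp( (2/b²)·∫_v^x p(u)/u² du ) dv = +∞ (equivalently, I₂ := −∫_0^x exp( (2/b²)·∫_v^x p(u)/u² du ) dv = −∞). -/
open MeasureTheory Filter

/-!
Since `p` stays above some `a > 0` near `0`, the inner integral is at least `a / v + C` as
`v → 0⁺`. The inequality `t < exp t` then bounds the outer integrand below by a positive multiple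
of `v⁻¹`, which is not integrable at `0`.
-/

open Set Topology

theorem lintegral_ofReal_inv_Ioo_zero {x : ℝ} (hx : 0 < x) :
    ∫⁻ v in Ioo 0 x, ENNReal.ofReal v⁻¹ = ⊤ := by
  have not_integrableOn : ¬ IntegrableOn (fun v : ℝ ↦ v⁻¹) (Ioo 0 x) := by
    rw [← intervalIntegrable_iff_integrableOn_Ioo_of_le hx.le, intervalIntegrable_inv_iff]
    simp [hx.ne]
  have inv_nonneg_ae : 0 ≤ᵐ[volume.restrict (Ioo 0 x)] fun v : ℝ ↦ v⁻¹ := by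
    filter_upwards [ae_restrict_mem measurableSet_Ioo] with v hv
    exact inv_nonneg.2 hv.1.le
  by_contra h
  exact not_integrableOn <| (lintegral_ofReal_ne_top_iff_integrable
    measurable_inv.aestronglyMeasurable inv_nonneg_ae).1 h

theorem lintegral_ofReal_Ioo_zero_eq_top_of_inv_le {K x : ℝ} {f : ℝ → ℝ} (hK : 0 < K)
    (hx : 0 < x) (hf : ∀ᶠ v in 𝓝[>] 0, K * v⁻¹ ≤ f v) :
    ∫⁻ v in Ioo 0 x, ENNReal.ofReal (f v) = ⊤ := by
  obtain ⟨δ, hδ : 0 < δ, hfδ⟩ := mem_nhdsGT_iff_exists_Ioo_subset.1 hf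
  refine top_unique ?_
  calc ⊤ = ENNReal.ofReal K * ∫⁻ v in Ioo 0 (min δ x), ENNReal.ofReal v⁻¹ := by
        rw [lintegral_ofReal_inv_Ioo_zero (lt_min hδ hx),
          ENNReal.mul_top (ENNReal.ofReal_pos.2 hK).ne']
    _ = ∫⁻ v in Ioo 0 (min δ x), ENNReal.ofReal (K * v⁻¹) := by
        simp only [ENNReal.ofReal_mul hK.le]
        rw [lintegral_const_mul _ (by fun_prop)]
    _ ≤ ∫⁻ v in Ioo 0 (min δ x), ENNReal.ofReal (f v) :=
        setLIntegral_mono' measurableSet_Ioo fun v hv ↦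
          ENNReal.ofReal_le_ofReal (hfδ ⟨hv.1, hv.2.trans_le (min_le_left δ x)⟩)
    _ ≤ ∫⁻ v in Ioo 0 x, ENNReal.ofReal (f v) :=
        lintegral_mono_set (Ioo_subset_Ioo_right (min_le_right δ x))

theorem lintegral_ofReal_exp_Ioo_zero_eq_top {a C x : ℝ} {F : ℝ → ℝ} (ha : 0 < a) (hx : 0 < x)
    (hF : ∀ᶠ v in 𝓝[>] 0, a / v + C ≤ F v) :
    ∫⁻ v in Ioo 0 x, ENNReal.ofReal (Real.exp (F v)) = ⊤ := by
  refine lintegral_ofReal_Ioo_zero_eq_top_of_inv_le (K := a * Real.exp C) (by positivity) hx ?_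
  filter_upwards [hF] with v hv
  calc a * Real.exp C * v⁻¹ = a / v * Real.exp C := by ring
    _ ≤ Real.exp (a / v) * Real.exp C := by
        gcongr
        linarith [Real.add_one_le_exp (a / v)]
    _ = Real.exp (a / v + C) := (Real.exp_add _ _).symm
    _ ≤ Real.exp (F v) := Real.exp_le_exp.2 hv

theorem integral_div_sq {a v w : ℝ} (zero_notMem : (0 : ℝ) ∉ uIcc v w) :
    ∫ u in v..w, a / u ^ 2 = a / v - a / w := by
  have integral_zpow_neg_two : ∫ u in v..w, u ^ (-2 : ℤ) = v⁻¹ - w⁻¹ := by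
    rw [integral_zpow (Or.inr ⟨by norm_num, zero_notMem⟩)]
    norm_num [div_neg]
  calc ∫ u in v..w, a / u ^ 2 = ∫ u in v..w, a * u ^ (-2 : ℤ) := by
        simp only [zpow_neg, div_eq_mul_inv, zpow_ofNat]
    _ = a * (v⁻¹ - w⁻¹) := by rw [intervalIntegral.integral_const_mul, integral_zpow_neg_two]
    _ = a / v - a / w := by ring

theorem exists_eventually_div_add_le_integral {a x : ℝ} {f : ℝ → ℝ} (hx : 0 < x)
    (hf : LocallyIntegrableOn f (Ioc 0 x)) (haf : ∀ᶠ u in 𝓝[>] 0, a / u ^ 2 ≤ f u) :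
    ∃ C, ∀ᶠ v in 𝓝[>] 0, a / v + C ≤ ∫ u in v..x, f u := by
  obtain ⟨δ, ⟨hδ, hδx⟩, hfδ⟩ := (mem_nhdsGT_iff_exists_mem_Ioc_Ioo_subset hx).1 haf
  have intervalIntegrable_f {v w : ℝ} (hv : v ∈ Ioc 0 x) (hw : w ∈ Ioc 0 x) :
      IntervalIntegrable f volume v w :=
    (hf.integrableOn_compact_subset (ordConnected_Ioc.uIcc_subset hv hw)
      isCompact_uIcc).intervalIntegrable
  refine ⟨(∫ u in δ..x, f u) - a / δ, ?_⟩
  filter_upwards [Ioo_mem_nhdsGT hδ] with v ⟨hv, hvδ⟩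
  have hv_mem : v ∈ Ioc 0 x := ⟨hv, hvδ.le.trans hδx⟩
  have zero_notMem : (0 : ℝ) ∉ uIcc v δ := notMem_uIcc_of_lt hv hδ
  have intervalIntegrable_div_sq : IntervalIntegrable (fun u ↦ a / u ^ 2) volume v δ :=
    ContinuousOn.intervalIntegrable <| continuousOn_const.div (by fun_prop) fun u hu ↦
      pow_ne_zero 2 (ne_of_mem_of_not_mem hu zero_notMem)
  calc a / v + ((∫ u in δ..x, f u) - a / δ)
      = (∫ u in v..δ, a / u ^ 2) + ∫ u in δ..x, f u := by
        rw [integral_div_sq zero_notMem]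
        ring
    _ ≤ (∫ u in v..δ, f u) + ∫ u in δ..x, f u := by
        gcongr
        exact intervalIntegral.integral_mono_on_of_le_Ioo hvδ.le intervalIntegrable_div_sq
          (intervalIntegrable_f hv_mem ⟨hδ, hδx⟩) fun u hu ↦ hfδ ⟨hv.trans hu.1, hu.2⟩
    _ = ∫ u in v..x, f u :=
        intervalIntegral.integral_add_adjacent_intervals
          (intervalIntegrable_f hv_mem ⟨hδ, hδx⟩)
          (intervalIntegrable_f ⟨hδ, hδx⟩ ⟨hx, le_rfl⟩)

theorem stmt_1_general {a c x : ℝ} {p : ℝ → ℝ} (ha : 0 < a) (hc : 0 < c) (hx : 0 < x)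
    (hp : LocallyIntegrableOn p (Ioc 0 x)) (hap : ∀ᶠ u in 𝓝[>] 0, a ≤ p u) :
    ∫⁻ v in Ioo 0 x, ENNReal.ofReal (Real.exp (c * ∫ u in v..x, p u / u ^ 2)) = ⊤ := by
  have continuousOn_inv_sq : ContinuousOn (fun u : ℝ ↦ (u ^ 2)⁻¹) (Ioc 0 x) :=
    (continuousOn_pow 2).inv₀ fun u hu ↦ pow_ne_zero 2 hu.1.ne'
  have locallyIntegrableOn_div_sq : LocallyIntegrableOn (fun u ↦ p u / u ^ 2) (Ioc 0 x) :=
    hp.mul_continuousOn continuousOn_inv_sq isLocallyClosed_Ioc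
  have div_sq_le : ∀ᶠ u in 𝓝[>] 0, a / u ^ 2 ≤ p u / u ^ 2 :=
    hap.mono fun u hu ↦ by gcongr
  obtain ⟨C, hC⟩ :=
    exists_eventually_div_add_le_integral hx locallyIntegrableOn_div_sq div_sq_le
  refine lintegral_ofReal_exp_Ioo_zero_eq_top (C := c * C) (mul_pos hc ha) hx ?_
  filter_upwards [hC] with v hv
  calc c * a / v + c * C = c * (a / v + C) := by ring
    _ ≤ c * ∫ u in v..x, p u / u ^ 2 := by gcongr

/-- Lemma A.2: if `p(0) > 0` (with `p` continuous, nonnegative and nondecreasing on `[0,x]`),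
then `∫_0^x exp((2/b²) ∫_v^x p(u)/u² du) dv = +∞`, i.e. `I₂ = -∞`. -/
theorem stmt_1 (b x : ℝ) (hb : 0 < b) (hx : 0 < x) (p : ℝ → ℝ)
    (hp_cont : Continuous p) (hp_nonneg : ∀ u, 0 ≤ p u)
    (hp_mono : MonotoneOn p (Set.Icc 0 x)) (hp0 : 0 < p 0) :
    (∫⁻ v in Set.Ioo (0 : ℝ) x, ENNReal.ofReal
      (Real.exp ((2 / b ^ 2) * ∫ u in v..x, p u / u ^ 2))) = ⊤ :=
  stmt_1_general (half_pos hp0) (by positivity) hx (hp_cont.locallyIntegrable.locallyIntegrableOn _)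
    (nhdsWithin_le_nhds (hp_cont.tendsto 0 |>.eventually_const_le (half_lt_self hp0)))
end

section
/- Let b > 0, x > 0, α > 1, p₁ > 0 and p₂ ≥ 0, and let p(u) = p₁·(u + p₂)^α for u ≥ 0. Then I₁ := ∫_x^{+∞} exp( −(2/b²)·∫_x^v p(u)/u² du ) dv < +∞. -/
open MeasureTheory Filter

/-!
If `f u` eventually dominates `c * u ^ s` with `c > 0` and `s > -1`, integrating gives
`∫ u in a..v, f u ≥ c / (s + 1) * v ^ (s + 1) - K`, so `exp (-∫ u in a..v, f u)` is
`O(exp (-c / (s + 1) * v ^ (s + 1)))`, which is integrable at infinity because `s + 1 > 0`.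
When `p u` dominates `c * u ^ α`, the rate `2 / b ^ 2 * p u / u ^ 2` falls under this criterion
with `s = α - 2`, and `α > 1` is exactly `s > -1`.
-/

open Set

section LocallyIntegrableOn

variable {E : Type*} [NormedAddCommGroup E] {f : ℝ → E} {μ : Measure ℝ} {a : ℝ}

theorem intervalIntegrable_of_locallyIntegrableOn_Ici (hf : LocallyIntegrableOn f (Ici a) μ)
    {u v : ℝ} (hu : a ≤ u) (hv : a ≤ v) : IntervalIntegrable f μ u v :=
  (hf.integrableOn_compact_subset (ordConnected_Ici.uIcc_subset hu hv)
    isCompact_uIcc).intervalIntegrable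

theorem continuousOn_primitive_Ici [NormedSpace ℝ E] [NullSingletonClass μ]
    (hf : LocallyIntegrableOn f (Ici a) μ) :
    ContinuousOn (fun v ↦ ∫ u in a..v, f u ∂μ) (Ici a) := by
  intro v hv
  have hav : a < v + 1 := lt_add_of_le_of_pos hv one_pos
  have hcont : ContinuousOn (fun v ↦ ∫ u in a..v, f u ∂μ) (Icc a (v + 1)) := by
    rw [← uIcc_of_le hav.le]
    exact intervalIntegral.continuousOn_primitive_interval'
      (intervalIntegrable_of_locallyIntegrableOn_Ici hf le_rfl hav.le) left_mem_uIcc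
  refine (hcont v ⟨hv, by linarith⟩).mono_of_mem_nhdsWithin ?_
  rw [← Ici_inter_Iic]
  exact inter_mem_nhdsWithin _ (Iic_mem_nhds (lt_add_one v))

end LocallyIntegrableOn

theorem integrableOn_exp_neg_mul_rpow {k r : ℝ} (hr : 0 < r) (hk : 0 < k) :
    IntegrableOn (fun v : ℝ ↦ Real.exp (-k * v ^ r)) (Ioi 0) := by
  simpa only [Real.rpow_zero, one_mul] using
    integrableOn_rpow_mul_exp_neg_mul_rpow (s := 0) (by norm_num) hr hk

section PowerLowerBound

variable {f : ℝ → ℝ} {a c s : ℝ}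

theorem exists_mul_rpow_sub_le_integral (hf : LocallyIntegrableOn f (Ici a)) (hs : -1 < s)
    (hle : ∀ᶠ u in atTop, c * u ^ s ≤ f u) :
    ∃ K, ∀ᶠ v in atTop, c / (s + 1) * v ^ (s + 1) - K ≤ ∫ u in a..v, f u := by
  obtain ⟨M, hM⟩ := eventually_atTop.mp (hle.and (eventually_ge_atTop a))
  have haM : a ≤ M := (hM M le_rfl).2
  refine ⟨c / (s + 1) * M ^ (s + 1) - ∫ u in a..M, f u, ?_⟩
  filter_upwards [eventually_ge_atTop M] with v hMv
  have hint_aM := intervalIntegrable_of_locallyIntegrableOn_Ici hf le_rfl haM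
  have hint_Mv := intervalIntegrable_of_locallyIntegrableOn_Ici hf haM (haM.trans hMv)
  have htail : c * ((v ^ (s + 1) - M ^ (s + 1)) / (s + 1)) ≤ ∫ u in M..v, f u := by
    rw [← integral_rpow (Or.inl hs), ← intervalIntegral.integral_const_mul]
    exact intervalIntegral.integral_mono_on hMv
      ((intervalIntegral.intervalIntegrable_rpow' hs).const_mul c) hint_Mv
      fun u hu ↦ (hM u hu.1).1
  calc c / (s + 1) * v ^ (s + 1) - (c / (s + 1) * M ^ (s + 1) - ∫ u in a..M, f u)
      = (∫ u in a..M, f u) + c * ((v ^ (s + 1) - M ^ (s + 1)) / (s + 1)) := by ring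
    _ ≤ (∫ u in a..M, f u) + ∫ u in M..v, f u := by gcongr
    _ = ∫ u in a..v, f u := intervalIntegral.integral_add_adjacent_intervals hint_aM hint_Mv

theorem isBigO_exp_neg_integral_of_rpow_le (hf : LocallyIntegrableOn f (Ici a)) (hs : -1 < s)
    (hle : ∀ᶠ u in atTop, c * u ^ s ≤ f u) :
    (fun v ↦ Real.exp (-∫ u in a..v, f u)) =O[atTop]
      fun v ↦ Real.exp (-(c / (s + 1)) * v ^ (s + 1)) := by
  obtain ⟨K, hK⟩ := exists_mul_rpow_sub_le_integral hf hs hle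
  refine .of_bound (Real.exp K) (hK.mono fun v hv ↦ ?_)
  rw [Real.norm_of_nonneg (Real.exp_nonneg _), Real.norm_of_nonneg (Real.exp_nonneg _),
    ← Real.exp_add, Real.exp_le_exp]
  linarith

theorem integrableOn_exp_neg_integral_of_rpow_le (hf : LocallyIntegrableOn f (Ici a)) (hs : -1 < s)
    (hc : 0 < c) (hle : ∀ᶠ u in atTop, c * u ^ s ≤ f u) :
    IntegrableOn (fun v ↦ Real.exp (-∫ u in a..v, f u)) (Ici a) := by
  have hs' : 0 < s + 1 := by linarith
  have hloc : LocallyIntegrableOn (fun v ↦ Real.exp (-∫ u in a..v, f u)) (Ici a) :=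
    (continuousOn_primitive_Ici hf).neg.rexp.locallyIntegrableOn measurableSet_Ici
  exact hloc.integrableOn_of_isBigO_atTop (isBigO_exp_neg_integral_of_rpow_le hf hs hle)
    ⟨Ioi 0, Ioi_mem_atTop 0, integrableOn_exp_neg_mul_rpow hs' (div_pos hc hs')⟩

end PowerLowerBound

theorem locallyIntegrableOn_div_sq {p : ℝ → ℝ} {x : ℝ} (hx : 0 < x)
    (hp : LocallyIntegrableOn p (Ici x)) :
    LocallyIntegrableOn (fun u ↦ p u / u ^ 2) (Ici x) := by
  simp only [div_eq_mul_inv]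
  refine hp.mul_continuousOn ?_ isClosed_Ici.isLocallyClosed
  exact (continuousOn_pow 2).inv₀ fun u hu ↦ pow_ne_zero 2 (hx.trans_le hu).ne'

theorem stmt_4_general {b x α c : ℝ} {p : ℝ → ℝ} (hb : b ≠ 0) (hx : 0 < x) (hα : 1 < α)
    (hc : 0 < c) (hp : LocallyIntegrableOn p (Ici x))
    (hle : ∀ᶠ u in atTop, c * u ^ α ≤ p u) :
    (∫⁻ v in Ioi x, ENNReal.ofReal
      (Real.exp (-(2 / b ^ 2) * ∫ u in x..v, p u / u ^ 2))) < ⊤ := by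
  have hk : 0 < 2 / b ^ 2 := by positivity
  have hrate : ∀ᶠ u in atTop, 2 / b ^ 2 * c * u ^ (α - 2) ≤ 2 / b ^ 2 * (p u / u ^ 2) := by
    filter_upwards [hle, eventually_gt_atTop 0] with u hu hu₀
    rw [Real.rpow_sub hu₀, Real.rpow_two, mul_assoc, ← mul_div_assoc c]
    gcongr
  have hint := integrableOn_exp_neg_integral_of_rpow_le
    ((locallyIntegrableOn_div_sq hx hp).smul (2 / b ^ 2)) (by linarith) (mul_pos hk hc) hrate
  simp only [Pi.smul_apply, smul_eq_mul, intervalIntegral.integral_const_mul, ← neg_mul] at hint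
  exact (hint.mono_set Ioi_subset_Ici_self).lintegral_lt_top

theorem continuous_mul_add_rpow (p₁ p₂ : ℝ) {α : ℝ} (hα : 0 ≤ α) :
    Continuous fun u : ℝ ↦ p₁ * (u + p₂) ^ α :=
  continuous_const.mul ((continuous_add_const p₂).rpow_const fun _ ↦ .inr hα)

theorem eventually_mul_rpow_le_mul_add_rpow {p₁ p₂ α : ℝ} (hα : 0 ≤ α) (hp₁ : 0 ≤ p₁)
    (hp₂ : 0 ≤ p₂) : ∀ᶠ u : ℝ in atTop, p₁ * u ^ α ≤ p₁ * (u + p₂) ^ α := by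
  filter_upwards [eventually_ge_atTop 0] with u hu
  gcongr
  exact le_add_of_nonneg_right hp₂

/-- Example 2.5: for `p(u) = p₁ (u + p₂)^α` with `α > 1`, `I₁ < +∞`. -/
theorem stmt_4 (b x α p₁ p₂ : ℝ) (hb : 0 < b) (hx : 0 < x) (hα : 1 < α)
    (hp₁ : 0 < p₁) (hp₂ : 0 ≤ p₂) :
    (∫⁻ v in Set.Ioi x, ENNReal.ofReal
      (Real.exp (-(2 / b ^ 2) * ∫ u in x..v, p₁ * (u + p₂) ^ α / u ^ 2))) < ⊤ :=
  have hα₀ : 0 ≤ α := by linarith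
  stmt_4_general hb.ne' hx hα hp₁
    ((continuous_mul_add_rpow p₁ p₂ hα₀).locallyIntegrable.locallyIntegrableOn _)
    (eventually_mul_rpow_le_mul_add_rpow hα₀ hp₁.le hp₂)
end

section
/- Let b > 0, x > 0, p₂ > 0 and p₁ ≥ 0, and let p(u) = p₂·u² + p₁·u for u ≥ 0. Then ∫_0^x exp( (2/b²)·∫_v^x p(u)/u² du ) dv = ∫_0^x (x/v)^{2p₁/b²} · exp( 2p₂·(x − v)/b² ) dv, and this integral is finite if and only if 2p₁ < b² (equivalently, I₂ > −∞ if and only if 2p₁ < b²). -/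
open MeasureTheory Filter

/-!
Since `p(u) / u² = p₂ + p₁ / u`, the integrand is `(x / v) ^ (2p₁ / b²) * exp (2p₂ (x - v) / b²)`.
Its second factor is continuous and positive on the compact interval `[0, x]`, so finiteness is
decided by the singularity `v ^ (-2p₁ / b²)` at `0` alone.
-/

theorem integrableOn_mul_continuousOn_iff {X 𝕜 : Type*} [TopologicalSpace X] [MeasurableSpace X]
    [OpensMeasurableSpace X] [NormedDivisionRing 𝕜] [SecondCountableTopologyEither X 𝕜]
    {μ : Measure X} {f g : X → 𝕜} {A K : Set X} (hg : ContinuousOn g K)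
    (hg₀ : ∀ x ∈ K, g x ≠ 0) (hA : MeasurableSet A) (hK : IsCompact K) (hAK : A ⊆ K) :
    IntegrableOn (fun x ↦ f x * g x) A μ ↔ IntegrableOn f A μ := by
  refine ⟨fun h ↦ ?_, fun h ↦ h.mul_continuousOn_of_subset hg hA hK hAK⟩
  refine (h.mul_continuousOn_of_subset (hg.inv₀ hg₀) hA hK hAK).congr_fun (fun x hx ↦ ?_) hA
  exact mul_inv_cancel_right₀ (hg₀ x (hAK hx)) (f x)

theorem integrableOn_Ioo_div_rpow_iff {x a : ℝ} (hx : 0 < x) :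
    IntegrableOn (fun v ↦ (x / v) ^ a) (Set.Ioo 0 x) ↔ a < 1 := by
  have factor : Set.EqOn (fun v ↦ (x / v) ^ a) (fun v ↦ x ^ a * v ^ (-a)) (Set.Ioo 0 x) :=
    fun v hv ↦ by
      simp only [Real.div_rpow hx.le hv.1.le, Real.rpow_neg hv.1.le]
      exact div_eq_mul_inv _ _
  rw [integrableOn_congr_fun factor measurableSet_Ioo, IntegrableOn,
    integrable_const_mul_iff (Real.rpow_pos_of_pos hx a).ne'.isUnit, ← IntegrableOn,
    intervalIntegral.integrableOn_Ioo_rpow_iff hx, neg_lt_neg_iff]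

theorem lintegral_Ioo_div_rpow_mul_lt_top_iff {x a : ℝ} {g : ℝ → ℝ} (hx : 0 < x)
    (hg : ContinuousOn g (Set.Icc 0 x)) (hg₀ : ∀ v ∈ Set.Icc 0 x, 0 < g v) :
    (∫⁻ v in Set.Ioo 0 x, ENNReal.ofReal ((x / v) ^ a * g v)) < ⊤ ↔ a < 1 := by
  have measurable : AEStronglyMeasurable (fun v ↦ (x / v) ^ a * g v)
      (volume.restrict (Set.Ioo 0 x)) :=
    (by fun_prop : Measurable fun v ↦ (x / v) ^ a).aestronglyMeasurable.mul
      ((hg.mono Set.Ioo_subset_Icc_self).aestronglyMeasurable measurableSet_Ioo)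
  have nonneg : 0 ≤ᵐ[volume.restrict (Set.Ioo 0 x)] fun v ↦ (x / v) ^ a * g v :=
    ae_restrict_of_forall_mem measurableSet_Ioo fun v hv ↦
      mul_nonneg (Real.rpow_nonneg (div_pos hx hv.1).le a) (hg₀ v (Set.Ioo_subset_Icc_self hv)).le
  rw [lt_top_iff_ne_top, lintegral_ofReal_ne_top_iff_integrable measurable nonneg, ← IntegrableOn,
    integrableOn_mul_continuousOn_iff hg (fun v hv ↦ (hg₀ v hv).ne') measurableSet_Ioo
      isCompact_Icc Set.Ioo_subset_Icc_self,
    integrableOn_Ioo_div_rpow_iff hx]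

theorem integral_quadratic_div_sq {p₁ p₂ v x : ℝ} (hv : 0 < v) (hx : 0 < x) :
    ∫ u in v..x, (p₂ * u ^ 2 + p₁ * u) / u ^ 2 = p₂ * (x - v) + p₁ * Real.log (x / v) := by
  have zero_notMem : (0 : ℝ) ∉ Set.uIcc v x := Set.notMem_uIcc_of_lt hv hx
  have divide : Set.EqOn (fun u ↦ (p₂ * u ^ 2 + p₁ * u) / u ^ 2) (fun u ↦ p₂ + p₁ * u⁻¹)
      (Set.uIcc v x) := fun u hu ↦ by
    have : u ≠ 0 := ne_of_mem_of_not_mem hu zero_notMem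
    simp only
    field_simp
  have inv_integrable : IntervalIntegrable (fun u : ℝ ↦ u⁻¹) volume v x :=
    intervalIntegrable_inv_iff.2 (.inr zero_notMem)
  rw [intervalIntegral.integral_congr divide,
    intervalIntegral.integral_add intervalIntegrable_const (inv_integrable.const_mul p₁),
    intervalIntegral.integral_const, intervalIntegral.integral_const_mul,
    integral_inv_of_pos hv hx, smul_eq_mul, mul_comm p₂]

theorem exp_mul_integral_quadratic_div_sq {c p₁ p₂ v x : ℝ} (hv : 0 < v) (hx : 0 < x) :
    Real.exp (c * ∫ u in v..x, (p₂ * u ^ 2 + p₁ * u) / u ^ 2)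
      = (x / v) ^ (c * p₁) * Real.exp (c * p₂ * (x - v)) := by
  rw [integral_quadratic_div_sq hv hx, Real.rpow_def_of_pos (div_pos hx hv), ← Real.exp_add]
  ring_nf

theorem stmt_6_general (b x p₁ p₂ : ℝ) (hb : b ≠ 0) (hx : 0 < x) :
    (∫⁻ v in Set.Ioo (0 : ℝ) x, ENNReal.ofReal
        (Real.exp ((2 / b ^ 2) * ∫ u in v..x, (p₂ * u ^ 2 + p₁ * u) / u ^ 2)))
      = (∫⁻ v in Set.Ioo (0 : ℝ) x, ENNReal.ofReal
        ((x / v) ^ (2 * p₁ / b ^ 2) * Real.exp (2 * p₂ * (x - v) / b ^ 2)))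
    ∧ ((∫⁻ v in Set.Ioo (0 : ℝ) x, ENNReal.ofReal
        (Real.exp ((2 / b ^ 2) * ∫ u in v..x, (p₂ * u ^ 2 + p₁ * u) / u ^ 2))) < ⊤
      ↔ 2 * p₁ < b ^ 2) := by
  have closed_form : ∀ v ∈ Set.Ioo 0 x,
      Real.exp ((2 / b ^ 2) * ∫ u in v..x, (p₂ * u ^ 2 + p₁ * u) / u ^ 2)
        = (x / v) ^ (2 * p₁ / b ^ 2) * Real.exp (2 * p₂ * (x - v) / b ^ 2) := fun v hv ↦ by
    rw [exp_mul_integral_quadratic_div_sq hv.1 hx]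
    ring_nf
  have integrals_eq := setLIntegral_congr_fun (μ := volume) measurableSet_Ioo
    fun v hv ↦ congrArg ENNReal.ofReal (closed_form v hv)
  refine ⟨integrals_eq, ?_⟩
  rw [integrals_eq, lintegral_Ioo_div_rpow_mul_lt_top_iff hx (by fun_prop)
    (fun v _ ↦ Real.exp_pos _), div_lt_one (sq_pos_of_ne_zero hb)]

/-- Example 2.6 (case of `I₂`): for `p(u) = p₂ u² + p₁ u`,
`∫_0^x exp((2/b²) ∫_v^x p(u)/u² du) dv = ∫_0^x (x/v)^{2p₁/b²} exp(2p₂(x-v)/b²) dv`,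
and it is finite iff `2p₁ < b²` (equivalently `I₂ > -∞` iff `2p₁ < b²`). -/
theorem stmt_6 (b x p₁ p₂ : ℝ) (hb : 0 < b) (hx : 0 < x) (hp₂ : 0 < p₂) (hp₁ : 0 ≤ p₁) :
    (∫⁻ v in Set.Ioo (0 : ℝ) x, ENNReal.ofReal
        (Real.exp ((2 / b ^ 2) * ∫ u in v..x, (p₂ * u ^ 2 + p₁ * u) / u ^ 2)))
      = (∫⁻ v in Set.Ioo (0 : ℝ) x, ENNReal.ofReal
        ((x / v) ^ (2 * p₁ / b ^ 2) * Real.exp (2 * p₂ * (x - v) / b ^ 2)))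
    ∧ ((∫⁻ v in Set.Ioo (0 : ℝ) x, ENNReal.ofReal
        (Real.exp ((2 / b ^ 2) * ∫ u in v..x, (p₂ * u ^ 2 + p₁ * u) / u ^ 2))) < ⊤
      ↔ 2 * p₁ < b ^ 2) :=
  stmt_6_general b x p₁ p₂ hb.ne' hx
end

section
/- Let b > 0, c > 0, p₂ > 0, p₁ ≥ 0 and p₀ ≥ 0, and define φ(v) = exp( −(2/b²)·∫_c^v (p₂·u² + p₁·u + p₀)/u² du ) for v ≥ c. Then lim_{z → +∞} ( ∫_z^{+∞} φ(v) dv ) / φ(z) = b²/(2p₂). -/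
open MeasureTheory Filter Topology

/-!
If the logarithmic derivative of `f` tends to `l < 0` at infinity, then `f` decays exponentially, so
its tail integral is finite near infinity and L'Hôpital's rule compares the tail with `f`: the
quotient of derivatives is `-f / f' = -(logDeriv f)⁻¹`, which tends to `-l⁻¹`. For
`φ(v) = exp (-(2/b²) ∫_c^v q)` the logarithmic derivative is `-(2/b²) q`, and the rate
`q(u) = (p₂u² + p₁u + p₀)/u²` tends to `p₂`.
-/

theorem hasDerivAt_integral_Ioi {E : Type*} [NormedAddCommGroup E] [NormedSpace ℝ E]
    [CompleteSpace E] {f : ℝ → E} {a x : ℝ} (hf : IntegrableOn f (Set.Ioi a)) (hax : a < x)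
    (hfx : ContinuousAt f x) :
    HasDerivAt (fun z => ∫ v in Set.Ioi z, f v) (-f x) x := by
  have hint : IntervalIntegrable f volume a x :=
    (intervalIntegrable_iff_integrableOn_Ioc_of_le hax.le).2 (hf.mono_set Set.Ioc_subset_Ioi_self)
  have hmeas : StronglyMeasurableAtFilter f (𝓝 x) :=
    ⟨Set.Ioi a, Ioi_mem_nhds hax, hf.aestronglyMeasurable⟩
  refine ((intervalIntegral.integral_hasDerivAt_right hint hmeas hfx).const_sub
    (∫ v in Set.Ioi a, f v)).congr_of_eventuallyEq ?_
  filter_upwards [Ioi_mem_nhds hax] with z hz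
  rw [← intervalIntegral.integral_Ioi_sub_Ioi hf (le_of_lt hz), sub_sub_cancel]

section LogDeriv

variable {f : ℝ → ℝ} {k l : ℝ}

-- With `f ^ 2` in place of `log |f|`, zeros and sign changes of `f` need no separate treatment.
theorem antitoneOn_sq_mul_exp_of_logDeriv_le {a : ℝ}
    (hdiff : ∀ x ∈ Set.Ici a, DifferentiableAt ℝ f x)
    (hle : ∀ x ∈ Set.Ici a, logDeriv f x ≤ k) :
    AntitoneOn (fun x => f x ^ 2 * Real.exp (-(2 * k) * x)) (Set.Ici a) := by
  have hderiv : ∀ x ∈ Set.Ici a, HasDerivAt (fun x => f x ^ 2 * Real.exp (-(2 * k) * x))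
      (2 * f x ^ 2 * Real.exp (-(2 * k) * x) * (logDeriv f x - k)) x := by
    intro x hx
    have hf' : deriv f x * f x = logDeriv f x * f x ^ 2 := by
      rw [logDeriv_apply]
      obtain h0 | h0 := eq_or_ne (f x) 0
      · rw [h0, zero_pow two_ne_zero, mul_zero, mul_zero]
      · field_simp
    refine (((hdiff x hx).hasDerivAt.fun_pow 2).fun_mul
      ((hasDerivAt_id' x).const_mul (-(2 * k))).exp).congr_deriv ?_
    push_cast
    linear_combination (2 * Real.exp (-(2 * k) * x)) * hf'
  refine antitoneOn_of_hasDerivWithinAt_nonpos (convex_Ici a)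
    (fun x hx => (hderiv x hx).continuousAt.continuousWithinAt)
    (fun x hx => (hderiv x (interior_subset hx)).hasDerivWithinAt) fun x hx => ?_
  exact mul_nonpos_of_nonneg_of_nonpos (by positivity)
    (sub_nonpos.2 (hle x (interior_subset hx)))

theorem isBigO_exp_of_logDeriv_le (hdiff : ∀ᶠ x in atTop, DifferentiableAt ℝ f x)
    (hle : ∀ᶠ x in atTop, logDeriv f x ≤ k) :
    f =O[atTop] fun x => Real.exp (k * x) := by
  obtain ⟨a, ha⟩ := eventually_atTop.1 (hdiff.and hle)
  have hanti := antitoneOn_sq_mul_exp_of_logDeriv_le (fun x hx => (ha x hx).1)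
    fun x hx => (ha x hx).2
  refine Asymptotics.IsBigO.of_pow two_ne_zero
    (.of_bound (f a ^ 2 * Real.exp (-(2 * k) * a)) ?_)
  filter_upwards [eventually_ge_atTop a] with x hx
  have hexp : Real.exp (-(2 * k) * x) * Real.exp (k * x) ^ 2 = 1 := by
    rw [← Real.exp_nat_mul, ← Real.exp_add, Real.exp_eq_one_iff]
    push_cast
    ring
  simp only [Pi.pow_apply, Real.norm_eq_abs, abs_pow, sq_abs]
  calc f x ^ 2 = f x ^ 2 * Real.exp (-(2 * k) * x) * Real.exp (k * x) ^ 2 := by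
        rw [mul_assoc, hexp, mul_one]
    _ ≤ f a ^ 2 * Real.exp (-(2 * k) * a) * Real.exp (k * x) ^ 2 :=
        mul_le_mul_of_nonneg_right (hanti Set.self_mem_Ici hx hx) (sq_nonneg _)

theorem eventually_differentiableAt_of_tendsto_logDeriv (hl : l ≠ 0)
    (hf : Tendsto (logDeriv f) atTop (𝓝 l)) : ∀ᶠ x in atTop, DifferentiableAt ℝ f x :=
  (hf.eventually_ne hl).mono fun x hx =>
    not_imp_comm.1 (logDeriv_eq_zero_of_not_differentiableAt f x) hx

theorem isBigO_exp_of_tendsto_logDeriv (hl : l ≠ 0) (hlk : l < k)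
    (hf : Tendsto (logDeriv f) atTop (𝓝 l)) : f =O[atTop] fun x => Real.exp (k * x) :=
  isBigO_exp_of_logDeriv_le (eventually_differentiableAt_of_tendsto_logDeriv hl hf)
    (hf.eventually_le_const hlk)

theorem tendsto_zero_of_tendsto_logDeriv (hl : l < 0)
    (hf : Tendsto (logDeriv f) atTop (𝓝 l)) : Tendsto f atTop (𝓝 0) := by
  obtain ⟨k, hlk, hk⟩ := exists_between hl
  exact (isBigO_exp_of_tendsto_logDeriv hl.ne hlk hf).trans_tendsto
    (Real.tendsto_exp_atBot.comp (tendsto_id.const_mul_atTop_of_neg hk))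

theorem exists_integrableOn_Ioi_of_tendsto_logDeriv (hl : l < 0)
    (hf : Tendsto (logDeriv f) atTop (𝓝 l)) : ∃ a, IntegrableOn f (Set.Ioi a) := by
  obtain ⟨k, hlk, hk⟩ := exists_between hl
  obtain ⟨a, ha⟩ := eventually_atTop.1 (eventually_differentiableAt_of_tendsto_logDeriv hl.ne hf)
  refine ⟨a, integrable_of_isBigO_exp_neg (neg_pos.2 hk)
    (fun x hx => (ha x hx).continuousAt.continuousWithinAt) ?_⟩
  simpa only [neg_neg] using isBigO_exp_of_tendsto_logDeriv hl.ne hlk hf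

theorem tendsto_integral_Ioi_div_of_tendsto_logDeriv (hl : l < 0)
    (hf : Tendsto (logDeriv f) atTop (𝓝 l)) :
    Tendsto (fun z => (∫ v in Set.Ioi z, f v) / f z) atTop (𝓝 (-l⁻¹)) := by
  have hdiff := eventually_differentiableAt_of_tendsto_logDeriv hl.ne hf
  have hderiv_ne : ∀ᶠ x in atTop, deriv f x ≠ 0 :=
    (hf.eventually_ne hl.ne).mono fun x hx => (div_ne_zero_iff.1 hx).1
  obtain ⟨a, ha⟩ := exists_integrableOn_Ioi_of_tendsto_logDeriv hl hf
  have htail : ∀ᶠ x in atTop, HasDerivAt (fun z => ∫ v in Set.Ioi z, f v) (-f x) x := by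
    filter_upwards [hdiff, eventually_gt_atTop a] with x hx hax
    exact hasDerivAt_integral_Ioi ha hax hx.continuousAt
  refine HasDerivAt.lhopital_zero_atTop htail (hdiff.mono fun x hx => hx.hasDerivAt) hderiv_ne
    (tendsto_integral_Ioi_zero tendsto_id) (tendsto_zero_of_tendsto_logDeriv hl hf) ?_
  refine (hf.inv₀ hl.ne).neg.congr fun x => ?_
  rw [logDeriv_apply, inv_div, neg_div]

end LogDeriv

section ExpIntegral

variable {q : ℝ → ℝ} {c : ℝ}

theorem logDeriv_exp_const_mul_integral (k : ℝ) {z : ℝ} (hq : ContinuousOn q (Set.Ici c))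
    (hz : c < z) :
    logDeriv (fun v => Real.exp (k * ∫ u in c..v, q u)) z = k * q z := by
  have hint : IntervalIntegrable q volume c z :=
    (hq.mono Set.Icc_subset_Ici_self).intervalIntegrable_of_Icc hz.le
  have hderiv : HasDerivAt (fun v => ∫ u in c..v, q u) (q z) z :=
    intervalIntegral.integral_hasDerivAt_right hint
      ((hq.mono Set.Ioi_subset_Ici_self).stronglyMeasurableAtFilter isOpen_Ioi z hz)
      (hq.continuousAt (Ici_mem_nhds hz))
  rw [logDeriv_apply, (hderiv.const_mul k).exp.deriv, mul_div_cancel_left₀ _ (Real.exp_ne_zero _)]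

theorem tendsto_integral_Ioi_exp_const_mul_integral_div {k l : ℝ}
    (hq : ContinuousOn q (Set.Ici c)) (hkl : k * l < 0) (hlim : Tendsto q atTop (𝓝 l)) :
    Tendsto (fun z => (∫ v in Set.Ioi z, Real.exp (k * ∫ u in c..v, q u)) /
      Real.exp (k * ∫ u in c..z, q u)) atTop (𝓝 (-(k * l)⁻¹)) := by
  refine tendsto_integral_Ioi_div_of_tendsto_logDeriv hkl ((hlim.const_mul k).congr' ?_)
  filter_upwards [eventually_gt_atTop c] with z hz
  exact (logDeriv_exp_const_mul_integral k hq hz).symm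

end ExpIntegral

theorem tendsto_quadratic_div_sq_atTop (p₀ p₁ p₂ : ℝ) :
    Tendsto (fun u : ℝ => (p₂ * u ^ 2 + p₁ * u + p₀) / u ^ 2) atTop (𝓝 p₂) := by
  have hsum : Tendsto (fun u : ℝ => p₂ + p₁ / u + p₀ / u ^ 2) atTop (𝓝 (p₂ + 0 + 0)) :=
    (tendsto_const_nhds.add (tendsto_const_nhds.div_atTop tendsto_id)).add
      (tendsto_const_nhds.div_atTop (tendsto_pow_atTop two_ne_zero))
  rw [add_zero, add_zero] at hsum
  refine hsum.congr' ?_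
  filter_upwards [eventually_ne_atTop 0] with u hu
  field_simp

theorem stmt_7_general (b c p₀ p₁ p₂ : ℝ) (hb : b ≠ 0) (hc : 0 < c) (hp₂ : 0 < p₂) :
    Tendsto (fun z : ℝ =>
      (∫ v in Set.Ioi z,
          Real.exp (-(2 / b ^ 2) * ∫ u in c..v, (p₂ * u ^ 2 + p₁ * u + p₀) / u ^ 2)) /
        Real.exp (-(2 / b ^ 2) * ∫ u in c..z, (p₂ * u ^ 2 + p₁ * u + p₀) / u ^ 2))
      atTop (𝓝 (b ^ 2 / (2 * p₂))) := by
  have hcont : ContinuousOn (fun u : ℝ => (p₂ * u ^ 2 + p₁ * u + p₀) / u ^ 2) (Set.Ici c) :=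
    ContinuousOn.div (by fun_prop) (by fun_prop) fun u hu => pow_ne_zero 2 (hc.trans_le hu).ne'
  have hneg : -(2 / b ^ 2) * p₂ < 0 :=
    mul_neg_of_neg_of_pos (neg_neg_of_pos (by positivity)) hp₂
  have hval : -(-(2 / b ^ 2) * p₂)⁻¹ = b ^ 2 / (2 * p₂) := by field_simp
  rw [← hval]
  exact tendsto_integral_Ioi_exp_const_mul_integral_div hcont hneg
    (tendsto_quadratic_div_sq_atTop p₀ p₁ p₂)

/-- The L'Hopital computation in the proof of Theorem 2.7:
`lim_{z→+∞} (∫_z^∞ φ(v) dv) / φ(z) = b²/(2p₂)`, where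
`φ(v) = exp(-(2/b²) ∫_c^v (p₂u² + p₁u + p₀)/u² du)`. -/
theorem stmt_7 (b c p₀ p₁ p₂ : ℝ) (hb : 0 < b) (hc : 0 < c)
    (hp₂ : 0 < p₂) (hp₁ : 0 ≤ p₁) (hp₀ : 0 ≤ p₀) :
    Tendsto (fun z : ℝ =>
      (∫ v in Set.Ioi z,
          Real.exp (-(2 / b ^ 2) * ∫ u in c..v, (p₂ * u ^ 2 + p₁ * u + p₀) / u ^ 2)) /
        Real.exp (-(2 / b ^ 2) * ∫ u in c..z, (p₂ * u ^ 2 + p₁ * u + p₀) / u ^ 2))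
      atTop (𝓝 (b ^ 2 / (2 * p₂))) :=
  stmt_7_general b c p₀ p₁ p₂ hb.ne' hc hp₂
end

section
/- Let b > 0, c > 0, p₂ > 0, p₁ ≥ 0 and p₀ ≥ 0, define φ(v) = exp( −(2/b²)·∫_c^v (p₂·u² + p₁·u + p₀)/u² du ) for v ≥ c, let m(z) = ∫_c^z φ(v) dv and m(∞) = ∫_c^{+∞} φ(v) dv. Then m(∞) < +∞ and ∫_c^{+∞} ( m(∞) − m(z) ) / ( z²·φ(z) ) dz < +∞. -/
open MeasureTheory Filter

/-!
The weight `exp (k * v)` turns the lower bound `k` on the rate `g` into monotonicity: if `k ≤ g`,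
then `exp (k * v) * φ v` is antitone for `φ v = exp (-∫ u in c..v, g u)`. Hence `φ` lies below
the exponential `φ z * exp (-k * (v - z))` to the right of `z`, so its tail beyond `z` is at most
`φ z / k`. Dividing by `w z * φ z` leaves `(k * w z)⁻¹`, which is integrable for `w z = z ^ 2`.
-/

section ExponentialDecay

variable {f w : ℝ → ℝ} {c k z v : ℝ}

lemma le_mul_exp_of_antitoneOn_exp_mul
    (hf : AntitoneOn (fun v => Real.exp (k * v) * f v) (Set.Ici z)) (hzv : z ≤ v) :
    f v ≤ Real.exp (k * z) * f z * Real.exp (-k * v) := by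
  have weighted_le : Real.exp (k * v) * f v ≤ Real.exp (k * z) * f z :=
    hf Set.self_mem_Ici hzv hzv
  rwa [neg_mul, Real.exp_neg, ← div_eq_mul_inv, le_div_iff₀' (Real.exp_pos _)]

lemma integrableOn_Ioi_of_antitoneOn_exp_mul (hk : 0 < k)
    (hf : AntitoneOn (fun v => Real.exp (k * v) * f v) (Set.Ici c))
    (hf₀ : ∀ v ∈ Set.Ioi c, 0 ≤ f v) : IntegrableOn f (Set.Ioi c) := by
  have f_eq : f = fun v => Real.exp (-k * v) * (Real.exp (k * v) * f v) := by
    ext v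
    rw [← mul_assoc, ← Real.exp_add, neg_mul, neg_add_cancel, Real.exp_zero, one_mul]
  have f_meas : AEStronglyMeasurable f (volume.restrict (Set.Ioi c)) := by
    rw [f_eq]
    have weighted_meas := aemeasurable_restrict_of_antitoneOn (μ := volume) measurableSet_Ioi
      (hf.mono Set.Ioi_subset_Ici_self)
    exact (AEMeasurable.mul (by fun_prop) weighted_meas).aestronglyMeasurable
  refine Integrable.mono' ((exp_neg_integrableOn_Ioi c hk).const_mul (Real.exp (k * c) * f c))
    f_meas ((ae_restrict_iff' measurableSet_Ioi).2 (ae_of_all _ fun v hv => ?_))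
  rw [Real.norm_of_nonneg (hf₀ v hv)]
  exact le_mul_exp_of_antitoneOn_exp_mul hf (Set.mem_Ioi.1 hv).le

lemma setIntegral_Ioi_le_div_of_antitoneOn_exp_mul (hk : 0 < k)
    (hf : AntitoneOn (fun v => Real.exp (k * v) * f v) (Set.Ici z))
    (hf₀ : ∀ v ∈ Set.Ioi z, 0 ≤ f v) : ∫ v in Set.Ioi z, f v ≤ f z / k :=
  calc ∫ v in Set.Ioi z, f v
      ≤ ∫ v in Set.Ioi z, Real.exp (k * z) * f z * Real.exp (-k * v) :=
        setIntegral_mono_on (integrableOn_Ioi_of_antitoneOn_exp_mul hk hf hf₀)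
          ((exp_neg_integrableOn_Ioi z hk).const_mul _) measurableSet_Ioi
          fun _ hv => le_mul_exp_of_antitoneOn_exp_mul hf (Set.mem_Ioi.1 hv).le
    _ = f z / k := by
        rw [integral_const_mul, integral_exp_mul_Ioi (neg_lt_zero.2 hk), neg_mul, Real.exp_neg]
        field_simp

lemma lintegral_tail_div_lt_top_of_antitoneOn_exp_mul (hk : 0 < k)
    (hf : AntitoneOn (fun v => Real.exp (k * v) * f v) (Set.Ici c))
    (hf₀ : ∀ v ∈ Set.Ioi c, 0 < f v) (hw₀ : ∀ z ∈ Set.Ioi c, 0 < w z)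
    (hw : IntegrableOn (fun z => (w z)⁻¹) (Set.Ioi c)) :
    ∫⁻ z in Set.Ioi c, ENNReal.ofReal ((∫ v in Set.Ioi z, f v) / (w z * f z)) < ⊤ := by
  refine (setLIntegral_mono' measurableSet_Ioi fun z hz => ENNReal.ofReal_le_ofReal ?_).trans_lt
    (hw.const_mul k⁻¹).lintegral_lt_top
  have tail_le : ∫ v in Set.Ioi z, f v ≤ f z / k :=
    setIntegral_Ioi_le_div_of_antitoneOn_exp_mul hk
      (hf.mono (Set.Ici_subset_Ici.2 (Set.mem_Ioi.1 hz).le))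
      fun v hv => (hf₀ v (Set.Ioi_subset_Ioi (Set.mem_Ioi.1 hz).le hv)).le
  have fz_pos := hf₀ z hz
  have wz_pos := hw₀ z hz
  calc (∫ v in Set.Ioi z, f v) / (w z * f z) ≤ f z / k / (w z * f z) := by gcongr
    _ = k⁻¹ * (w z)⁻¹ := by field_simp

end ExponentialDecay

section ScaleDensity

variable {g : ℝ → ℝ} {c k : ℝ}

lemma antitoneOn_exp_mul_mul_exp_neg_integral
    (hg : ∀ v ∈ Set.Ici c, IntervalIntegrable g volume c v) (hkg : ∀ u ∈ Set.Ici c, k ≤ g u) :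
    AntitoneOn (fun v => Real.exp (k * v) * Real.exp (-∫ u in c..v, g u)) (Set.Ici c) := by
  intro z hz v hv hzv
  have hg_zv : IntervalIntegrable g volume z v := (hg z hz).symm.trans (hg v hv)
  have integral_ge : k * (v - z) ≤ ∫ u in z..v, g u :=
    calc k * (v - z) = ∫ _ in z..v, k := by
          rw [intervalIntegral.integral_const, smul_eq_mul, mul_comm]
      _ ≤ ∫ u in z..v, g u :=
          intervalIntegral.integral_mono_on hzv intervalIntegrable_const hg_zv
            fun u hu => hkg u (hz.trans hu.1)
  have integral_split := intervalIntegral.integral_add_adjacent_intervals (hg z hz) hg_zv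
  simp only [← Real.exp_add, Real.exp_le_exp]
  linarith

theorem stmt_8_general {φ m w : ℝ → ℝ} (hk : 0 < k)
    (hg : ∀ v ∈ Set.Ici c, IntervalIntegrable g volume c v) (hkg : ∀ u ∈ Set.Ici c, k ≤ g u)
    (hw₀ : ∀ z ∈ Set.Ioi c, 0 < w z) (hw : IntegrableOn (fun z => (w z)⁻¹) (Set.Ioi c))
    (hφ : ∀ v, φ v = Real.exp (-∫ u in c..v, g u)) (hm : ∀ z, m z = ∫ v in c..z, φ v) :
    (∫⁻ v in Set.Ioi c, ENNReal.ofReal (φ v)) < ⊤ ∧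
    (∫⁻ z in Set.Ioi c, ENNReal.ofReal
      (((∫ v in Set.Ioi c, φ v) - m z) / (w z * φ z))) < ⊤ := by
  have φ_pos (v : ℝ) : 0 < φ v := hφ v ▸ Real.exp_pos _
  have φ_decay : AntitoneOn (fun v => Real.exp (k * v) * φ v) (Set.Ici c) := by
    simpa only [hφ] using antitoneOn_exp_mul_mul_exp_neg_integral hg hkg
  have φ_int : IntegrableOn φ (Set.Ioi c) :=
    integrableOn_Ioi_of_antitoneOn_exp_mul hk φ_decay fun v _ => (φ_pos v).le
  have tail_eq : ∀ z ∈ Set.Ioi c, (∫ v in Set.Ioi c, φ v) - m z = ∫ v in Set.Ioi z, φ v := by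
    intro z hz
    rw [hm, ← intervalIntegral.integral_Ioi_sub_Ioi φ_int (Set.mem_Ioi.1 hz).le, sub_sub_cancel]
  refine ⟨φ_int.lintegral_lt_top, ?_⟩
  rw [setLIntegral_congr_fun measurableSet_Ioi fun z hz => by rw [tail_eq z hz]]
  exact lintegral_tail_div_lt_top_of_antitoneOn_exp_mul hk φ_decay (fun v _ => φ_pos v) hw₀ hw

end ScaleDensity

section QuadraticDivSq

variable {p₀ p₁ p₂ c u v : ℝ}

lemma intervalIntegrable_quadratic_div_sq (hc : 0 < c) (hv : 0 < v) :
    IntervalIntegrable (fun u => (p₂ * u ^ 2 + p₁ * u + p₀) / u ^ 2) volume c v :=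
  (ContinuousOn.div (by fun_prop) (by fun_prop) fun _ hu =>
    pow_ne_zero 2 ((lt_min hc hv).trans_le hu.1).ne').intervalIntegrable

lemma le_quadratic_div_sq (hp₁ : 0 ≤ p₁) (hp₀ : 0 ≤ p₀) (hu : 0 < u) :
    p₂ ≤ (p₂ * u ^ 2 + p₁ * u + p₀) / u ^ 2 := by
  rw [le_div_iff₀ (by positivity), add_assoc]
  exact le_add_of_nonneg_right (by positivity)

lemma integrableOn_Ioi_inv_sq (hc : 0 < c) :
    IntegrableOn (fun z : ℝ => (z ^ 2)⁻¹) (Set.Ioi c) := by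
  refine (integrableOn_Ioi_rpow_of_lt (a := -2) (by norm_num) hc).congr_fun (fun z hz => ?_)
    measurableSet_Ioi
  simp only [Real.rpow_neg (hc.trans hz).le, Real.rpow_two]

end QuadraticDivSq

/-- In the proof of Theorem 2.7: `m(∞) < +∞` and
`∫_c^∞ (m(∞) - m(z)) / (z² φ(z)) dz < +∞`, where
`φ(v) = exp(-(2/b²) ∫_c^v (p₂u² + p₁u + p₀)/u² du)` and `m(z) = ∫_c^z φ(v) dv`. -/
theorem stmt_8 (b c p₀ p₁ p₂ : ℝ) (hb : 0 < b) (hc : 0 < c)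
    (hp₂ : 0 < p₂) (hp₁ : 0 ≤ p₁) (hp₀ : 0 ≤ p₀)
    (φ : ℝ → ℝ)
    (hφ : ∀ v, φ v = Real.exp (-(2 / b ^ 2) * ∫ u in c..v, (p₂ * u ^ 2 + p₁ * u + p₀) / u ^ 2))
    (m : ℝ → ℝ) (hm : ∀ z, m z = ∫ v in c..z, φ v) :
    (∫⁻ v in Set.Ioi c, ENNReal.ofReal (φ v)) < ⊤ ∧
    (∫⁻ z in Set.Ioi c, ENNReal.ofReal
      (((∫ v in Set.Ioi c, φ v) - m z) / (z ^ 2 * φ z))) < ⊤ := by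
  have hb₂ : 0 < 2 / b ^ 2 := by positivity
  refine stmt_8_general (mul_pos hb₂ hp₂)
    (fun v hv => (intervalIntegrable_quadratic_div_sq hc (hc.trans_le hv)).const_mul (2 / b ^ 2))
    (fun u hu => mul_le_mul_of_nonneg_left
      (le_quadratic_div_sq hp₁ hp₀ (hc.trans_le hu)) hb₂.le)
    (fun z hz => pow_pos (hc.trans hz) 2) (integrableOn_Ioi_inv_sq hc) (fun v => ?_) hm
  rw [hφ, intervalIntegral.integral_const_mul, neg_mul]
end

section
/- Let b > 0, c > 0, p₂ > 0, p₁ ≥ 0 and p₀ ≥ 0. With φ(v) = exp( −(2/b²)·∫_c^v (p₂·u² + p₁·u + p₀)/u² du ), m(z) = ∫_c^z φ(v) dv and m(∞) = ∫_c^{+∞} φ(v) dv, define for y ≥ c: M(y) = (2·m(y)/(b²·m(∞)))·∫_c^{+∞} (m(∞) − m(z))/(z²·φ(z)) dz − (2/b²)·∫_c^y (m(y) − m(z))/(z²·φ(z)) dz. Then M is twice differentiable on (c, +∞), satisfies (1/2)·b²·y²·M''(y) + (p₂·y² + p₁·y + p₀)·M'(y) = −1 for all y > c, M(c) = 0, and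 lim_{y → +∞} M(y) = 0. -/
open MeasureTheory Filter Topology

/-! Multiplying `M'' + r M' = -w` by the integrating factor `exp (∫ r)` gives `(M' / φ)' = -w / φ`
with `φ = exp (-∫ r)`; integrating twice yields `M` in terms of `m = ∫ φ`, up to a multiple of `m`
that is fixed by the condition at `+∞`. If `r ≥ κ > 0` near `+∞`, then `φ + κ m` has derivative
`(κ - r) φ ≤ 0` there. This one inequality bounds `m` and gives `κ (m(∞) - m) ≤ φ`, so that
`(m(∞) - m) w / φ` is integrable; it dominates the second integral as `y → +∞`. -/

section Primitive

variable {c y : ℝ} {f g : ℝ → ℝ}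

theorem intervalIntegrable_of_continuousOn_Ici (hf : ContinuousOn f (Set.Ici c)) (hy : c ≤ y) :
    IntervalIntegrable f volume c y :=
  (hf.mono Set.Icc_subset_Ici_self).intervalIntegrable_of_Icc hy

theorem hasDerivAt_integral_of_continuousOn_Ici (hf : ContinuousOn f (Set.Ici c)) (hy : c < y) :
    HasDerivAt (fun x => ∫ u in c..x, f u) (f y) y :=
  intervalIntegral.integral_hasDerivAt_right (intervalIntegrable_of_continuousOn_Ici hf hy.le)
    ((hf.mono Set.Ioi_subset_Ici_self).stronglyMeasurableAtFilter isOpen_Ioi y hy)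
    (hf.continuousAt (Ici_mem_nhds hy))

theorem continuousOn_integral_of_continuousOn_Ici (hf : ContinuousOn f (Set.Ici c)) :
    ContinuousOn (fun x => ∫ u in c..x, f u) (Set.Ici c) := by
  intro x (hx : c ≤ x)
  have hx' : c ≤ x + 1 := hx.trans (lt_add_one x).le
  have hcont := intervalIntegral.continuousOn_primitive_interval'
    (intervalIntegrable_of_continuousOn_Ici hf hx') Set.left_mem_uIcc
  rw [Set.uIcc_of_le hx'] at hcont
  exact (hcont x ⟨hx, (lt_add_one x).le⟩).mono_of_mem_nhdsWithin
    (inter_mem_nhdsWithin (Set.Ici c) (Iic_mem_nhds (lt_add_one x)))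

theorem hasDerivAt_integral_sub_mul {f' : ℝ} (hf : ContinuousOn f (Set.Ici c))
    (hg : ContinuousOn g (Set.Ici c)) (hy : c < y) (hf' : HasDerivAt f f' y) :
    HasDerivAt (fun x => ∫ z in c..x, (f x - f z) * g z) (f' * ∫ z in c..y, g z) y := by
  have hexpand : ∀ᶠ x in 𝓝 y, ∫ z in c..x, (f x - f z) * g z
      = f x * (∫ z in c..x, g z) - ∫ z in c..x, (f * g) z := by
    filter_upwards [Ioi_mem_nhds hy] with x hx
    simp_rw [sub_mul, Pi.mul_apply]
    rw [intervalIntegral.integral_sub (g := fun z => f z * g z)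
        ((intervalIntegrable_of_continuousOn_Ici hg (le_of_lt hx)).const_mul _)
        (intervalIntegrable_of_continuousOn_Ici (hf.mul hg) (le_of_lt hx)),
      intervalIntegral.integral_const_mul]
  have hderiv := (hf'.mul (hasDerivAt_integral_of_continuousOn_Ici hg hy)).sub
    (hasDerivAt_integral_of_continuousOn_Ici (hf.mul hg) hy)
  refine (hderiv.congr_of_eventuallyEq hexpand).congr_deriv ?_
  simp only [Pi.mul_apply]
  ring

theorem tendsto_integral_sub_mul_atTop {μ : Measure ℝ} {L : ℝ} (hf : MonotoneOn f (Set.Ici c))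
    (hL : Tendsto f atTop (𝓝 L)) (hg : AEStronglyMeasurable g (μ.restrict (Set.Ioi c)))
    (hint : IntegrableOn (fun z => (L - f z) * g z) (Set.Ioi c) μ) :
    Tendsto (fun y => ∫ z in c..y, (f y - f z) * g z ∂μ) atTop
      (𝓝 (∫ z in Set.Ioi c, (L - f z) * g z ∂μ)) := by
  have hf_le : ∀ y, c ≤ y → f y ≤ L := fun y hy =>
    ge_of_tendsto hL ((eventually_ge_atTop y).mono fun x hx => hf hy (hy.trans hx) hx)
  have hf_meas : AEStronglyMeasurable f (μ.restrict (Set.Ioi c)) :=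
    (aemeasurable_restrict_of_monotoneOn measurableSet_Ioi
      (hf.mono Set.Ioi_subset_Ici_self)).aestronglyMeasurable
  have hlim : Tendsto
      (fun y => ∫ z in Set.Ioi c, (Set.Iic y).indicator (fun z => (f y - f z) * g z) z ∂μ) atTop
      (𝓝 (∫ z in Set.Ioi c, (L - f z) * g z ∂μ)) := by
    refine tendsto_integral_filter_of_dominated_convergence (fun z => ‖(L - f z) * g z‖)
      (Eventually.of_forall fun y =>
        ((aestronglyMeasurable_const.sub hf_meas).mul hg).indicator measurableSet_Iic)
      ?_ hint.norm (ae_of_all _ fun z => ?_)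
    · filter_upwards [eventually_ge_atTop c] with y hy
      filter_upwards [ae_restrict_mem measurableSet_Ioi] with z (hz : c < z)
      by_cases hzy : z ≤ y
      · have hfzy : f z ≤ f y := hf hz.le hy hzy
        rw [Set.indicator_of_mem (Set.mem_Iic.2 hzy), norm_mul, norm_mul,
          Real.norm_of_nonneg (sub_nonneg.2 hfzy),
          Real.norm_of_nonneg (sub_nonneg.2 (hf_le z hz.le))]
        gcongr
        exact hf_le y hy
      · rw [Set.indicator_of_notMem (by simpa using hzy), norm_zero]
        exact norm_nonneg _
    · refine ((hL.sub_const (f z)).mul_const (g z)).congr' ?_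
      filter_upwards [eventually_ge_atTop z] with y hy
      rw [Set.indicator_of_mem (Set.mem_Iic.2 hy)]
  refine hlim.congr' ?_
  filter_upwards [eventually_ge_atTop c] with y hy
  rw [intervalIntegral.integral_of_le hy, setIntegral_indicator measurableSet_Iic,
    Set.Ioi_inter_Iic]

end Primitive

/-- The scale density of the operator `d²/dy² + r d/dy` with base point `c`: the solution of
`φ' = -r φ` with `φ c = 1`. -/
noncomputable def scaleDensity (r : ℝ → ℝ) (c v : ℝ) : ℝ :=
  Real.exp (-∫ u in c..v, r u)

/-- The scale function of `d²/dy² + r d/dy`: the solution of `m'' + r m' = 0` with `m c = 0` and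
`m' c = 1`. -/
noncomputable def scaleFunction (r : ℝ → ℝ) (c z : ℝ) : ℝ :=
  ∫ v in c..z, scaleDensity r c v

/-- The limit of the scale function at `+∞`, meaningful when the scale density is integrable on
`(c, +∞)`. -/
noncomputable def scaleMass (r : ℝ → ℝ) (c : ℝ) : ℝ :=
  ∫ v in Set.Ioi c, scaleDensity r c v

/-- The Green potential of the source `w`: the solution of `G'' + r G' = -w` on `(c, +∞)` with zero
boundary values at `c` and at `+∞`, written as a multiple of the scale function minus the solution
of `F'' + r F' = w` with `F c = 0` and `F' c = 0`. -/
noncomputable def greenPotential (r w : ℝ → ℝ) (c y : ℝ) : ℝ :=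
  scaleFunction r c y / scaleMass r c *
      (∫ z in Set.Ioi c, (scaleMass r c - scaleFunction r c z) * (w z / scaleDensity r c z))
    - ∫ z in c..y, (scaleFunction r c y - scaleFunction r c z) * (w z / scaleDensity r c z)

section Scale

variable {r : ℝ → ℝ} {c y z : ℝ}

theorem scaleDensity_pos : 0 < scaleDensity r c y :=
  Real.exp_pos _

theorem hasDerivAt_scaleDensity (hr : ContinuousOn r (Set.Ici c)) (hy : c < y) :
    HasDerivAt (scaleDensity r c) (-r y * scaleDensity r c y) y :=
  (hasDerivAt_integral_of_continuousOn_Ici hr hy).neg.exp.congr_deriv (mul_comm _ _)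

theorem continuousOn_scaleDensity (hr : ContinuousOn r (Set.Ici c)) :
    ContinuousOn (scaleDensity r c) (Set.Ici c) :=
  (continuousOn_integral_of_continuousOn_Ici hr).neg.rexp

theorem scaleFunction_self : scaleFunction r c c = 0 :=
  intervalIntegral.integral_same

theorem hasDerivAt_scaleFunction (hr : ContinuousOn r (Set.Ici c)) (hy : c < y) :
    HasDerivAt (scaleFunction r c) (scaleDensity r c y) y :=
  hasDerivAt_integral_of_continuousOn_Ici (continuousOn_scaleDensity hr) hy

theorem continuousOn_scaleFunction (hr : ContinuousOn r (Set.Ici c)) :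
    ContinuousOn (scaleFunction r c) (Set.Ici c) :=
  continuousOn_integral_of_continuousOn_Ici (continuousOn_scaleDensity hr)

theorem strictMonoOn_scaleFunction (hr : ContinuousOn r (Set.Ici c)) :
    StrictMonoOn (scaleFunction r c) (Set.Ici c) := by
  refine strictMonoOn_of_deriv_pos (convex_Ici c) (continuousOn_scaleFunction hr) fun y hy => ?_
  rw [interior_Ici] at hy
  rw [(hasDerivAt_scaleFunction hr hy).deriv]
  exact scaleDensity_pos

theorem tendsto_scaleFunction_atTop (hφ : IntegrableOn (scaleDensity r c) (Set.Ioi c)) :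
    Tendsto (scaleFunction r c) atTop (𝓝 (scaleMass r c)) :=
  intervalIntegral_tendsto_integral_Ioi c hφ tendsto_id

theorem scaleFunction_le_scaleMass (hr : ContinuousOn r (Set.Ici c))
    (hφ : IntegrableOn (scaleDensity r c) (Set.Ioi c)) (hz : c ≤ z) :
    scaleFunction r c z ≤ scaleMass r c :=
  ge_of_tendsto (tendsto_scaleFunction_atTop hφ) <| (eventually_ge_atTop z).mono fun _ hy =>
    (strictMonoOn_scaleFunction hr).monotoneOn hz (hz.trans hy) hy

theorem scaleMass_pos (hr : ContinuousOn r (Set.Ici c))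
    (hφ : IntegrableOn (scaleDensity r c) (Set.Ioi c)) : 0 < scaleMass r c := by
  have hc : c < c + 1 := lt_add_one c
  calc 0 = scaleFunction r c c := scaleFunction_self.symm
    _ < scaleFunction r c (c + 1) :=
      strictMonoOn_scaleFunction hr Set.self_mem_Ici (Set.mem_Ici.2 hc.le) hc
    _ ≤ scaleMass r c := scaleFunction_le_scaleMass hr hφ hc.le

end Scale

section GreenPotential

variable {r w : ℝ → ℝ} {c y : ℝ}

theorem continuousOn_div_scaleDensity (hr : ContinuousOn r (Set.Ici c))
    (hw : ContinuousOn w (Set.Ici c)) :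
    ContinuousOn (fun z => w z / scaleDensity r c z) (Set.Ici c) :=
  hw.div (continuousOn_scaleDensity hr) fun _ _ => scaleDensity_pos.ne'

theorem greenPotential_self : greenPotential r w c c = 0 := by
  simp [greenPotential, scaleFunction_self]

theorem hasDerivAt_greenPotential (hr : ContinuousOn r (Set.Ici c))
    (hw : ContinuousOn w (Set.Ici c)) (hy : c < y) :
    HasDerivAt (greenPotential r w c)
      (scaleDensity r c y *
        ((∫ z in Set.Ioi c, (scaleMass r c - scaleFunction r c z) * (w z / scaleDensity r c z))
            / scaleMass r c
          - ∫ z in c..y, w z / scaleDensity r c z)) y := by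
  have hm := hasDerivAt_scaleFunction hr hy
  refine (((hm.div_const _).mul_const _).sub (hasDerivAt_integral_sub_mul
    (continuousOn_scaleFunction hr) (continuousOn_div_scaleDensity hr hw) hy hm)).congr_deriv ?_
  ring

theorem hasDerivAt_deriv_greenPotential (hr : ContinuousOn r (Set.Ici c))
    (hw : ContinuousOn w (Set.Ici c)) (hy : c < y) :
    HasDerivAt (deriv (greenPotential r w c))
      (-w y - r y * deriv (greenPotential r w c) y) y := by
  have hderiv := (hasDerivAt_scaleDensity hr hy).mul
    ((hasDerivAt_integral_of_continuousOn_Ici (continuousOn_div_scaleDensity hr hw) hy).const_sub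
      ((∫ z in Set.Ioi c, (scaleMass r c - scaleFunction r c z) * (w z / scaleDensity r c z))
        / scaleMass r c))
  refine (hderiv.congr_of_eventuallyEq ?_).congr_deriv ?_
  · filter_upwards [Ioi_mem_nhds hy] with x hx
    exact (hasDerivAt_greenPotential hr hw hx).deriv
  · have hcancel : scaleDensity r c y * (w y / scaleDensity r c y) = w y :=
      mul_div_cancel₀ _ scaleDensity_pos.ne'
    rw [(hasDerivAt_greenPotential hr hw hy).deriv]
    linear_combination -hcancel

theorem tendsto_greenPotential_atTop (hr : ContinuousOn r (Set.Ici c))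
    (hw : ContinuousOn w (Set.Ici c)) (hφ : IntegrableOn (scaleDensity r c) (Set.Ioi c))
    (hint : IntegrableOn
      (fun z => (scaleMass r c - scaleFunction r c z) * (w z / scaleDensity r c z)) (Set.Ioi c)) :
    Tendsto (greenPotential r w c) atTop (𝓝 0) := by
  have hm := tendsto_scaleFunction_atTop hφ
  have hg : AEStronglyMeasurable (fun z => w z / scaleDensity r c z)
      (volume.restrict (Set.Ioi c)) :=
    ((continuousOn_div_scaleDensity hr hw).mono Set.Ioi_subset_Ici_self).aestronglyMeasurable
      measurableSet_Ioi
  have hlim := ((hm.div_const (scaleMass r c)).mul_const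
    (∫ z in Set.Ioi c, (scaleMass r c - scaleFunction r c z) * (w z / scaleDensity r c z))).sub
    (tendsto_integral_sub_mul_atTop (strictMonoOn_scaleFunction hr).monotoneOn hm hg hint)
  rwa [div_self (scaleMass_pos hr hφ).ne', one_mul, sub_self] at hlim

end GreenPotential

section DriftBoundedBelow

variable {r w : ℝ → ℝ} {c z v κ : ℝ}

theorem mul_scaleFunction_sub_le_scaleDensity (hr : ContinuousOn r (Set.Ici c)) (hz : c ≤ z)
    (hκ : ∀ u, z ≤ u → κ ≤ r u) (hzv : z ≤ v) :
    κ * (scaleFunction r c v - scaleFunction r c z) ≤ scaleDensity r c z := by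
  have hderiv : ∀ u, z < u → HasDerivAt (fun u => scaleDensity r c u + κ * scaleFunction r c u)
      (-r u * scaleDensity r c u + κ * scaleDensity r c u) u := fun u hu =>
    (hasDerivAt_scaleDensity hr (hz.trans_lt hu)).add
      ((hasDerivAt_scaleFunction hr (hz.trans_lt hu)).const_mul κ)
  have hanti : AntitoneOn (fun u => scaleDensity r c u + κ * scaleFunction r c u) (Set.Ici z) := by
    have hcont : ContinuousOn (fun u => scaleDensity r c u + κ * scaleFunction r c u)
        (Set.Ici c) :=
      (continuousOn_scaleDensity hr).add (continuousOn_const.mul (continuousOn_scaleFunction hr))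
    refine antitoneOn_of_deriv_nonpos (convex_Ici z) (hcont.mono (Set.Ici_subset_Ici.2 hz))
      (fun u hu => ?_) fun u hu => ?_ <;> rw [interior_Ici] at hu
    · exact (hderiv u hu).differentiableAt.differentiableWithinAt
    · rw [(hderiv u hu).deriv, ← add_mul]
      exact mul_nonpos_of_nonpos_of_nonneg (by linarith [hκ u (le_of_lt hu)]) scaleDensity_pos.le
  have hle := hanti Set.self_mem_Ici hzv hzv
  linarith [scaleDensity_pos (r := r) (c := c) (y := v)]

theorem integrableOn_scaleDensity (hr : ContinuousOn r (Set.Ici c)) (hκ : 0 < κ)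
    (hκr : ∀ᶠ u in atTop, κ ≤ r u) : IntegrableOn (scaleDensity r c) (Set.Ioi c) := by
  obtain ⟨A, hcA, hA⟩ := ((eventually_ge_atTop c).and (eventually_forall_ge_atTop.2 hκr)).exists
  refine integrableOn_Ioi_of_intervalIntegral_norm_bounded
    (scaleFunction r c A + scaleDensity r c A / κ) c
    (fun v => ((continuousOn_scaleDensity hr).mono
      Set.Icc_subset_Ici_self).integrableOn_Icc.mono_set Set.Ioc_subset_Icc_self) tendsto_id ?_
  filter_upwards [eventually_ge_atTop A] with v hv
  have hnorm : ∫ x in c..v, ‖scaleDensity r c x‖ = scaleFunction r c v :=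
    intervalIntegral.integral_congr fun x _ => Real.norm_of_nonneg scaleDensity_pos.le
  rw [id_eq, hnorm, ← sub_le_iff_le_add', le_div_iff₀' hκ]
  exact mul_scaleFunction_sub_le_scaleDensity hr hcA hA hv

theorem eventually_mul_scaleMass_sub_le_scaleDensity (hr : ContinuousOn r (Set.Ici c)) (hκ : 0 < κ)
    (hκr : ∀ᶠ u in atTop, κ ≤ r u) :
    ∀ᶠ z in atTop, κ * (scaleMass r c - scaleFunction r c z) ≤ scaleDensity r c z := by
  filter_upwards [eventually_ge_atTop c, eventually_forall_ge_atTop.2 hκr] with z hz hκz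
  have hlim :=
    ((tendsto_scaleFunction_atTop (integrableOn_scaleDensity hr hκ hκr)).sub_const
      (scaleFunction r c z)).const_mul κ
  exact le_of_tendsto hlim ((eventually_ge_atTop z).mono fun v hv =>
    mul_scaleFunction_sub_le_scaleDensity hr hz hκz hv)

theorem integrableOn_scaleMass_sub_mul_div (hr : ContinuousOn r (Set.Ici c)) (hκ : 0 < κ)
    (hκr : ∀ᶠ u in atTop, κ ≤ r u) (hw : ContinuousOn w (Set.Ici c))
    (hw_int : IntegrableOn w (Set.Ioi c)) :
    IntegrableOn (fun z => (scaleMass r c - scaleFunction r c z) * (w z / scaleDensity r c z))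
      (Set.Ioi c) := by
  have hcont : ContinuousOn
      (fun z => (scaleMass r c - scaleFunction r c z) * (w z / scaleDensity r c z)) (Set.Ici c) :=
    (continuousOn_const.sub (continuousOn_scaleFunction hr)).mul
      (continuousOn_div_scaleDensity hr hw)
  have hO : (fun z => (scaleMass r c - scaleFunction r c z) * (w z / scaleDensity r c z))
      =O[atTop] w := by
    refine Asymptotics.IsBigO.of_bound κ⁻¹ ?_
    filter_upwards [eventually_ge_atTop c,
      eventually_mul_scaleMass_sub_le_scaleDensity hr hκ hκr] with z hz htail
    have hφ : 0 < scaleDensity r c z := scaleDensity_pos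
    have hm : 0 ≤ scaleMass r c - scaleFunction r c z :=
      sub_nonneg.2 (scaleFunction_le_scaleMass hr (integrableOn_scaleDensity hr hκ hκr) hz)
    calc ‖(scaleMass r c - scaleFunction r c z) * (w z / scaleDensity r c z)‖
        = (scaleMass r c - scaleFunction r c z) / scaleDensity r c z * ‖w z‖ := by
          rw [norm_mul, norm_div, Real.norm_of_nonneg hm, Real.norm_of_nonneg hφ.le]
          ring
      _ ≤ κ⁻¹ * ‖w z‖ := by
          gcongr
          rwa [div_le_iff₀ hφ, inv_mul_eq_div, le_div_iff₀' hκ]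
  exact ((hcont.locallyIntegrableOn measurableSet_Ici).integrableOn_of_isBigO_atTop hO
    ⟨Set.Ioi c, Ioi_mem_atTop c, hw_int⟩).mono_set Set.Ioi_subset_Ici_self

theorem tendsto_greenPotential_atTop_of_eventually_le (hr : ContinuousOn r (Set.Ici c))
    (hκ : 0 < κ) (hκr : ∀ᶠ u in atTop, κ ≤ r u) (hw : ContinuousOn w (Set.Ici c))
    (hw_int : IntegrableOn w (Set.Ioi c)) : Tendsto (greenPotential r w c) atTop (𝓝 0) :=
  tendsto_greenPotential_atTop hr hw (integrableOn_scaleDensity hr hκ hκr)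
    (integrableOn_scaleMass_sub_mul_div hr hκ hκr hw hw_int)

end DriftBoundedBelow

theorem continuousOn_div_sq_Ici {c : ℝ} {f : ℝ → ℝ} (hc : 0 < c)
    (hf : ContinuousOn f (Set.Ici c)) : ContinuousOn (fun u => f u / u ^ 2) (Set.Ici c) :=
  hf.div (by fun_prop) fun _ hu => pow_ne_zero 2 (hc.trans_le hu).ne'

theorem integrableOn_const_div_sq_Ioi {c : ℝ} (hc : 0 < c) (k : ℝ) :
    IntegrableOn (fun z : ℝ => k / z ^ 2) (Set.Ioi c) := by
  refine IntegrableOn.congr_fun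
    ((integrableOn_Ioi_rpow_of_lt (a := -2) (by norm_num) hc).const_mul k)
    (fun z (hz : c < z) => ?_) measurableSet_Ioi
  rw [div_eq_mul_inv, Real.rpow_neg (hc.trans hz).le, Real.rpow_two]

theorem greenPotential_const_div_sq (r : ℝ → ℝ) (k c y : ℝ) :
    greenPotential r (fun z => k / z ^ 2) c y
      = k * scaleFunction r c y / scaleMass r c *
          (∫ z in Set.Ioi c,
            (scaleMass r c - scaleFunction r c z) / (z ^ 2 * scaleDensity r c z))
        - k * ∫ z in c..y,
            (scaleFunction r c y - scaleFunction r c z) / (z ^ 2 * scaleDensity r c z) := by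
  have hpull : ∀ a z : ℝ, (a - scaleFunction r c z) * (k / z ^ 2 / scaleDensity r c z)
      = k * ((a - scaleFunction r c z) / (z ^ 2 * scaleDensity r c z)) := fun a z => by ring
  simp only [greenPotential, hpull, integral_const_mul, intervalIntegral.integral_const_mul]
  ring

theorem stmt_9_general (b c p₀ p₁ p₂ : ℝ) (hb : b ≠ 0) (hc : 0 < c) (hp₂ : 0 < p₂)
    (φ : ℝ → ℝ)
    (hφ : ∀ v, φ v = Real.exp (-(2 / b ^ 2) * ∫ u in c..v, (p₂ * u ^ 2 + p₁ * u + p₀) / u ^ 2))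
    (m : ℝ → ℝ) (hm : ∀ z, m z = ∫ v in c..z, φ v)
    (minf : ℝ) (hminf : minf = ∫ v in Set.Ioi c, φ v)
    (M : ℝ → ℝ)
    (hM : ∀ y, M y = (2 * m y / (b ^ 2 * minf)) *
        (∫ z in Set.Ioi c, (minf - m z) / (z ^ 2 * φ z))
      - (2 / b ^ 2) * ∫ z in c..y, (m y - m z) / (z ^ 2 * φ z)) :
    (∀ y ∈ Set.Ioi c, DifferentiableAt ℝ M y ∧ DifferentiableAt ℝ (deriv M) y ∧
        (1 / 2) * b ^ 2 * y ^ 2 * deriv (deriv M) y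
          + (p₂ * y ^ 2 + p₁ * y + p₀) * deriv M y = -1)
    ∧ M c = 0 ∧ Tendsto M atTop (𝓝 0) := by
  have hk : 0 < 2 / b ^ 2 := by positivity
  let r : ℝ → ℝ := fun u => 2 / b ^ 2 * ((p₂ * u ^ 2 + p₁ * u + p₀) / u ^ 2)
  let w : ℝ → ℝ := fun z => 2 / b ^ 2 / z ^ 2
  have hr : ContinuousOn r (Set.Ici c) :=
    continuousOn_const.mul (continuousOn_div_sq_Ici hc (by fun_prop))
  have hw : ContinuousOn w (Set.Ici c) := continuousOn_div_sq_Ici hc continuousOn_const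
  obtain ⟨κ, hκ, hκr⟩ := exists_between (mul_pos hk hp₂)
  have hr_ge : ∀ᶠ u in atTop, κ ≤ r u :=
    ((tendsto_quadratic_div_sq_atTop p₀ p₁ p₂).const_mul _).eventually_const_le hκr
  obtain rfl : φ = scaleDensity r c := funext fun v => by
    rw [hφ, scaleDensity, intervalIntegral.integral_const_mul, neg_mul]
  obtain rfl : m = scaleFunction r c := funext hm
  obtain rfl : minf = scaleMass r c := hminf
  obtain rfl : M = greenPotential r w c := funext fun y => by
    rw [hM, greenPotential_const_div_sq]
    ring
  refine ⟨fun y (hy : c < y) => ?_, greenPotential_self,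
    tendsto_greenPotential_atTop_of_eventually_le hr hκ hr_ge hw
      (integrableOn_const_div_sq_Ioi hc _)⟩
  have hM'' := hasDerivAt_deriv_greenPotential hr hw hy
  refine ⟨(hasDerivAt_greenPotential hr hw hy).differentiableAt, hM''.differentiableAt, ?_⟩
  have hy0 : y ≠ 0 := (hc.trans hy).ne'
  rw [hM''.deriv]
  simp only [r, w]
  field_simp
  ring

/-- Boundary value problem (2.7): the explicit function `M` is twice differentiable on
`(c, +∞)`, solves `(1/2) b² y² M''(y) + (p₂ y² + p₁ y + p₀) M'(y) = -1` there,
vanishes at `c`, and tends to `0` at `+∞`. -/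
theorem stmt_9 (b c p₀ p₁ p₂ : ℝ) (hb : 0 < b) (hc : 0 < c)
    (hp₂ : 0 < p₂) (hp₁ : 0 ≤ p₁) (hp₀ : 0 ≤ p₀)
    (φ : ℝ → ℝ)
    (hφ : ∀ v, φ v = Real.exp (-(2 / b ^ 2) * ∫ u in c..v, (p₂ * u ^ 2 + p₁ * u + p₀) / u ^ 2))
    (m : ℝ → ℝ) (hm : ∀ z, m z = ∫ v in c..z, φ v)
    (minf : ℝ) (hminf : minf = ∫ v in Set.Ioi c, φ v)
    (M : ℝ → ℝ)
    (hM : ∀ y, M y = (2 * m y / (b ^ 2 * minf)) *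
        (∫ z in Set.Ioi c, (minf - m z) / (z ^ 2 * φ z))
      - (2 / b ^ 2) * ∫ z in c..y, (m y - m z) / (z ^ 2 * φ z)) :
    (∀ y ∈ Set.Ioi c, DifferentiableAt ℝ M y ∧ DifferentiableAt ℝ (deriv M) y ∧
        (1 / 2) * b ^ 2 * y ^ 2 * deriv (deriv M) y
          + (p₂ * y ^ 2 + p₁ * y + p₀) * deriv M y = -1)
    ∧ M c = 0 ∧ Tendsto M atTop (𝓝 0) :=
  stmt_9_general b c p₀ p₁ p₂ hb.ne' hc hp₂ φ hφ m hm minf hminf M hM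
end
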